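/- Let a, b > 0 with a + b = 2 and a > 1 (hence b < 1), let y > 0 and ε > 0, and let φ : [0, ε) → (0, ∞) be an infinitely differentiable function satisfying x·φ(x)^(−a) + y·φ(x)^(−b) = 1 for all x ∈ [0, ε). Then for every even integer j ≥ 2 the j-th derivative of φ at 0 is strictly negative; in particular there exists j ∈ ℕ with φ^(j)(0) < 0. -/

import Mathlib

/-!
Differentiating `x φ ^ (-a) + y φ ^ (-b) = 1` and eliminating `y` gives, for the functions
`B_r = φ ^ (r - 1) φ'` (so that `(φ ^ r)' = r B_r`), the identity
`b B_r = φ ^ (r - a) + (b - a) x B_{r-a}` for every real exponent `r`.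
Taking `n + 1` derivatives at `0` yields the closed recursion
`b B_r⁽ⁿ⁺¹⁾(0) = (r - a + (n + 1) (b - a)) B_{r-a}⁽ⁿ⁾(0)`, with `b B_r(0) = φ(0) ^ (r - a) > 0`
(`rpowDeriv_recursion` and `rpowDeriv_identity`).
Each step from `(r, n + 1)` to `(r - a, n)` lowers the factor by `b`, so if the first factor is
negative all of them are, and `B_r⁽ⁿ⁾(0)` has sign `(-1)ⁿ` (`rpowDeriv_sign`).
For `r = 1` the first factor is `(1 - a) + n (b - a) < 0`, and `φ⁽ʲ⁾(0) = B_1⁽ʲ⁻¹⁾(0)`,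
which is negative for even `j ≥ 2`.
-/

open Set

/-- The function `φ ^ (r - 1) φ'`, that is `(φ ^ r)' / r` when `r ≠ 0`, with the derivative
taken within `s`. -/
noncomputable def rpowDeriv (φ : ℝ → ℝ) (s : Set ℝ) (r x : ℝ) : ℝ :=
  φ x ^ (r - 1) * derivWithin φ s x

/-- At the origin only one term of the Leibniz formula for `x * f x` survives. -/
lemma iteratedDerivWithin_id_mul_zero {s : Set ℝ} (hs : UniqueDiffOn ℝ s) (h0 : (0 : ℝ) ∈ s)
    {f : ℝ → ℝ} (hf : ContDiffOn ℝ (⊤ : ℕ∞) f s) (n : ℕ) :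
    iteratedDerivWithin (n + 1) (fun x => x * f x) s 0 =
      (n + 1) * iteratedDerivWithin n f s 0 := by
  have hf' : ContDiffWithinAt ℝ ((n + 1 : ℕ) : WithTop ℕ∞) f s 0 :=
    (hf 0 h0).of_le (by exact_mod_cast le_top)
  have h := iteratedDerivWithin_mul (n := n + 1) h0 hs (f := fun x : ℝ => x) (g := f)
    (by fun_prop) hf'
  change iteratedDerivWithin (n + 1) ((fun x : ℝ => x) * f) s 0 = _
  rw [h, Finset.sum_eq_single 1]
  · simp [iteratedDerivWithin_fun_id, h0, hs]
  · intro i _ hi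
    rw [iteratedDerivWithin_fun_id h0 hs]
    simp [hi]
  · simp

section

variable {a b y : ℝ} {s : Set ℝ} {φ : ℝ → ℝ}

lemma contDiffOn_rpowDeriv (hs : UniqueDiffOn ℝ s) (hpos : ∀ x ∈ s, 0 < φ x)
    (hφ : ContDiffOn ℝ (⊤ : ℕ∞) φ s) (r : ℝ) :
    ContDiffOn ℝ (⊤ : ℕ∞) (rpowDeriv φ s r) s :=
  (hφ.rpow_const_of_ne fun x hx => (hpos x hx).ne').mul (hφ.derivWithin hs (by simp))

lemma hasDerivWithinAt_rpow_rpowDeriv (hpos : ∀ x ∈ s, 0 < φ x)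
    (hφ : ContDiffOn ℝ (⊤ : ℕ∞) φ s) (r : ℝ) {x : ℝ} (hx : x ∈ s) :
    HasDerivWithinAt (fun x => φ x ^ r) (r * rpowDeriv φ s r x) s x := by
  have hd : HasDerivWithinAt φ (derivWithin φ s x) s x :=
    ((hφ.differentiableOn (by simp)) x hx).hasDerivWithinAt
  convert hd.rpow_const (p := r) (Or.inl (hpos x hx).ne') using 1
  unfold rpowDeriv
  ring

/-- The implicit equation, differentiated, with `y` eliminated and multiplied by `φ ^ r`. -/
lemma rpowDeriv_identity (hs : UniqueDiffOn ℝ s) (hpos : ∀ x ∈ s, 0 < φ x)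
    (hφ : ContDiffOn ℝ (⊤ : ℕ∞) φ s)
    (heq : ∀ x ∈ s, x * φ x ^ (-a) + y * φ x ^ (-b) = 1) (r : ℝ) {x : ℝ} (hx : x ∈ s) :
    b * rpowDeriv φ s r x = φ x ^ (r - a) + (b - a) * (x * rpowDeriv φ s (r - a) x) := by
  have hD := ((hasDerivWithinAt_id x s).mul
    (hasDerivWithinAt_rpow_rpowDeriv hpos hφ (-a) hx)).add
    ((hasDerivWithinAt_rpow_rpowDeriv hpos hφ (-b) hx).const_mul y)
  have hD' := (hasDerivWithinAt_const x s (1 : ℝ)).congr (fun z hz => heq z hz) (heq x hx)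
  have h := (hs x hx).eq_deriv s hD hD'
  have h1 := heq x hx
  have hp := hpos x hx
  have e1 : φ x ^ (-a - 1) = φ x ^ (-a) * (φ x)⁻¹ := by
    rw [Real.rpow_sub hp, Real.rpow_one, div_eq_mul_inv]
  have e2 : φ x ^ (-b - 1) = φ x ^ (-b) * (φ x)⁻¹ := by
    rw [Real.rpow_sub hp, Real.rpow_one, div_eq_mul_inv]
  have e3 : φ x ^ (r - 1) = φ x ^ r * (φ x)⁻¹ := by
    rw [Real.rpow_sub hp, Real.rpow_one, div_eq_mul_inv]
  have e4 : φ x ^ (r - a) = φ x ^ r * φ x ^ (-a) := by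
    rw [← Real.rpow_add hp, sub_eq_add_neg]
  have e5 : φ x ^ (r - a - 1) = φ x ^ r * φ x ^ (-a) * (φ x)⁻¹ := by
    rw [Real.rpow_sub hp, Real.rpow_one, div_eq_mul_inv, e4]
  simp only [rpowDeriv, e1, e2, id] at h
  simp only [rpowDeriv, e3, e4, e5]
  linear_combination (-φ x ^ r) * h - b * φ x ^ r * (φ x)⁻¹ * derivWithin φ s x * h1

lemma rpowDeriv_recursion (hs : UniqueDiffOn ℝ s) (h0 : (0 : ℝ) ∈ s)
    (hpos : ∀ x ∈ s, 0 < φ x) (hφ : ContDiffOn ℝ (⊤ : ℕ∞) φ s)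
    (heq : ∀ x ∈ s, x * φ x ^ (-a) + y * φ x ^ (-b) = 1) (r : ℝ) (n : ℕ) :
    b * iteratedDerivWithin (n + 1) (rpowDeriv φ s r) s 0 =
      (r - a + (n + 1) * (b - a)) * iteratedDerivWithin n (rpowDeriv φ s (r - a)) s 0 := by
  have hB := contDiffOn_rpowDeriv hs hpos hφ (r - a)
  have hle : ((n + 1 : ℕ) : WithTop ℕ∞) ≤ ((⊤ : ℕ∞) : WithTop ℕ∞) := by exact_mod_cast le_top
  have hpow : ContDiffOn ℝ (⊤ : ℕ∞) (fun x => φ x ^ (r - a)) s :=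
    hφ.rpow_const_of_ne fun x hx => (hpos x hx).ne'
  have hxB : ContDiffOn ℝ (⊤ : ℕ∞)
      (fun x => (b - a) * (x * rpowDeriv φ s (r - a) x)) s :=
    contDiffOn_const.mul (contDiffOn_id.mul hB)
  have hpow' : iteratedDerivWithin (n + 1) (fun x => φ x ^ (r - a)) s 0 =
      (r - a) * iteratedDerivWithin n (rpowDeriv φ s (r - a)) s 0 := by
    rw [iteratedDerivWithin_succ', ← iteratedDerivWithin_const_mul_field]
    exact iteratedDerivWithin_congr (fun x hx =>
      (hasDerivWithinAt_rpow_rpowDeriv hpos hφ (r - a) hx).derivWithin (hs x hx)) h0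
  rw [← iteratedDerivWithin_const_mul_field,
    iteratedDerivWithin_congr (fun x hx => rpowDeriv_identity hs hpos hφ heq r hx) h0,
    iteratedDerivWithin_fun_add h0 hs ((hpow 0 h0).of_le hle) ((hxB 0 h0).of_le hle),
    hpow', iteratedDerivWithin_const_mul_field, iteratedDerivWithin_id_mul_zero hs h0 hB]
  ring

lemma rpowDeriv_sign (hb : 0 < b) (hs : UniqueDiffOn ℝ s) (h0 : (0 : ℝ) ∈ s)
    (hpos : ∀ x ∈ s, 0 < φ x) (hφ : ContDiffOn ℝ (⊤ : ℕ∞) φ s)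
    (heq : ∀ x ∈ s, x * φ x ^ (-a) + y * φ x ^ (-b) = 1) (n : ℕ) (r : ℝ)
    (hr : r - a + n * (b - a) < 0) :
    0 < (-1) ^ n * iteratedDerivWithin n (rpowDeriv φ s r) s 0 := by
  induction n generalizing r with
  | zero =>
    have h := rpowDeriv_identity hs hpos hφ heq r h0
    have hp := Real.rpow_pos_of_pos (hpos 0 h0) (r - a)
    simp only [zero_mul, mul_zero, add_zero] at h
    rw [← h] at hp
    simpa using (pos_iff_pos_of_mul_pos hp).1 hb
  | succ n ih =>
    push_cast at hr
    have h := ih (r - a) (by linarith)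
    have hrec := rpowDeriv_recursion hs h0 hpos hφ heq r n
    have hprod := mul_pos (neg_pos.2 hr) h
    refine pos_of_mul_pos_right (a := b) ?_ hb.le
    calc (0 : ℝ) < _ := hprod
      _ = _ := by rw [pow_succ]; linear_combination (-1) ^ n * hrec

end


open Set in
/-- Negativity of even-order derivatives of the sliced Gauduchon–Ornea potential:
if `a, b > 0`, `a + b = 2`, `a > 1`, `y > 0`, and `φ : [0, ε) → (0, ∞)` is smooth
with `x * φ(x) ^ (-a) + y * φ(x) ^ (-b) = 1` on `[0, ε)`, then for every even
`j ≥ 2` the `j`-th derivative of `φ` at `0` is strictly negative; in particular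
some derivative of `φ` at `0` is strictly negative. -/
theorem stmt_5 (a b : ℝ) (ha : 0 < a) (hb : 0 < b) (hab : a + b = 2) (ha1 : 1 < a)
    (y ε : ℝ) (hy : 0 < y) (hε : 0 < ε) (φ : ℝ → ℝ)
    (hφpos : ∀ x ∈ Ico (0 : ℝ) ε, 0 < φ x)
    (hφsmooth : ContDiffOn ℝ (⊤ : ℕ∞) φ (Ico 0 ε))
    (hφeq : ∀ x ∈ Ico (0 : ℝ) ε, x * (φ x) ^ (-a) + y * (φ x) ^ (-b) = 1) :
    (∀ j : ℕ, Even j → 2 ≤ j → iteratedDerivWithin j φ (Ico 0 ε) 0 < 0) ∧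
      (∃ j : ℕ, iteratedDerivWithin j φ (Ico 0 ε) 0 < 0) := by
  have hs : UniqueDiffOn ℝ (Ico (0 : ℝ) ε) := uniqueDiffOn_Ico 0 ε
  have h0 : (0 : ℝ) ∈ Ico (0 : ℝ) ε := ⟨le_rfl, hε⟩
  have main : ∀ j : ℕ, Even j → 2 ≤ j → iteratedDerivWithin j φ (Ico 0 ε) 0 < 0 := by
    intro j hj hj2
    obtain ⟨n, rfl⟩ : ∃ n, j = n + 1 := ⟨j - 1, by omega⟩
    have hn : Odd n := by
      rw [Nat.even_add_one] at hj
      exact Nat.not_even_iff_odd.1 hj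
    have hfac : (1 : ℝ) - a + n * (b - a) < 0 := by
      have : (n : ℝ) * (b - a) ≤ 0 :=
        mul_nonpos_of_nonneg_of_nonpos n.cast_nonneg (by linarith)
      linarith
    have h := rpowDeriv_sign hb hs h0 hφpos hφsmooth hφeq n 1 hfac
    have hB : rpowDeriv φ (Ico 0 ε) 1 = derivWithin φ (Ico 0 ε) := by
      funext x
      simp [rpowDeriv]
    rw [hn.neg_one_pow, hB, ← iteratedDerivWithin_succ'] at h
    linarith
  exact ⟨main, 2, main 2 even_two le_rfl⟩
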